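/- Let P be a range-restricted CHR program. If P is terminating in the ωe semantics, i.e. there is no infinite ↦e derivation from the ωe state ⟨𝔾; 𝔹; 𝕍⟩, then P is terminating in the ω! semantics from the corresponding initial state, i.e. there is no infinite ↦! derivation from the ω! state ⟨𝔾; ∅; 𝔹; 𝕍⟩. -/

import Mathlib

set_option autoImplicit false

/-! ## Syntax: variables, terms, constraints -/

/-- Variables -/
abbrev Var := ℕ

/-- First-order terms -/
inductive Term : Type
  | var : Var → Term
  | app : String → List Term → Term

mutual
  /-- Application of a substitution to a term -/
  def Term.subst (ρ : Var → Term) : Term → Term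
    | .var x => ρ x
    | .app f ts => .app f (Term.substList ρ ts)
  /-- Application of a substitution to a list of terms -/
  def Term.substList (ρ : Var → Term) : List Term → List Term
    | [] => []
    | t :: ts => Term.subst ρ t :: Term.substList ρ ts
end

mutual
  /-- Variables occurring in a term -/
  def Term.varList : Term → List Var
    | .var x => [x]
    | .app _ ts => Term.varLists ts
  /-- Variables occurring in a list of terms -/
  def Term.varLists : List Term → List Var
    | [] => []
    | t :: ts => Term.varList t ++ Term.varLists ts
end

/-- User-defined (CHR) constraints -/
structure UserC where
  name : String
  args : List Term

def UserC.subst (ρ : Var → Term) (c : UserC) : UserC := ⟨c.name, Term.substList ρ c.args⟩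
def UserC.varList (c : UserC) : List Var := Term.varLists c.args

/-- Built-in constraints: syntactic equality `≐`, theory-interpreted predicates, and falsum `⊥`.
    The empty conjunction plays the role of `⊤`. -/
inductive BAtom : Type
  | eq : Term → Term → BAtom
  | pred : String → List Term → BAtom
  | bfalse : BAtom

def BAtom.subst (ρ : Var → Term) : BAtom → BAtom
  | .eq s t => .eq (s.subst ρ) (t.subst ρ)
  | .pred p ts => .pred p (Term.substList ρ ts)
  | .bfalse => .bfalse

def BAtom.varList : BAtom → List Var
  | .eq s t => s.varList ++ t.varList
  | .pred _ ts => Term.varLists ts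
  | .bfalse => []

/-- A user-defined constraint store: a multiset of CHR constraints -/
abbrev UStore := Multiset UserC
/-- A built-in constraint store: a conjunction (multiset) of built-in atoms -/
abbrev BStore := Multiset BAtom

def UStore.vars (G : UStore) : Set Var := {x | ∃ c ∈ G, x ∈ c.varList}
def BStore.vars (B : BStore) : Set Var := {x | ∃ a ∈ B, x ∈ a.varList}
def UStore.subst (ρ : Var → Term) (G : UStore) : UStore := G.map (UserC.subst ρ)

/-- The single substitution [X/t] -/
def single (X : Var) (t : Term) : Var → Term := fun y => if y = X then t else .var y

/-- The falsum built-in store `⊥` -/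
def botStore : BStore := {BAtom.bfalse}

/-! ## The constraint theory CT -/

/-- A constraint theory: an interpretation of the built-in predicate symbols over the
    term model; `≐` is interpreted as syntactic equality and `⊥` as falsity. -/
structure CTheory where
  interp : String → List Term → Prop

/-- Satisfaction of a built-in atom under a valuation `ρ` -/
def CTheory.satAtom (I : CTheory) (ρ : Var → Term) : BAtom → Prop
  | .eq s t => s.subst ρ = t.subst ρ
  | .pred p ts => I.interp p (Term.substList ρ ts)
  | .bfalse => False

/-- Satisfaction of a conjunction of built-in atoms -/
def CTheory.sat (I : CTheory) (ρ : Var → Term) (B : BStore) : Prop := ∀ a ∈ B, I.satAtom ρ a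

/-- `CT ⊨ ∃ S. B ↔ ∃ S'. B'` : the stores `B`, `B'` are equivalent up to
    existential quantification of the variable sets `S`, `S'` respectively. -/
def CTheory.equivUpTo (I : CTheory) (S S' : Set Var) (B B' : BStore) : Prop :=
  ∀ ρ : Var → Term,
    (∃ ρ', (∀ x ∉ S, ρ' x = ρ x) ∧ I.sat ρ' B) ↔ (∃ ρ', (∀ x ∉ S', ρ' x = ρ x) ∧ I.sat ρ' B')

/-! ## CHR rules and programs -/

/-- A CHR rule `r @ kept \ removed ⇔ guard | bodyC, bodyB`.
    A propagation rule is one with `removed = []`. -/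
structure Rule where
  kept : List UserC
  removed : List UserC
  guard : List BAtom
  bodyC : List UserC
  bodyB : List BAtom

def ucsVarList (l : List UserC) : List Var := (l.map UserC.varList).flatten
def basVarList (l : List BAtom) : List Var := (l.map BAtom.varList).flatten

/-- All variables of a rule -/
def Rule.vars (r : Rule) : Set Var :=
  {x | x ∈ ucsVarList (r.kept ++ r.removed ++ r.bodyC) ++ basVarList (r.guard ++ r.bodyB)}

/-- The local variables of a rule: those of guard and body not occurring in the heads -/
def Rule.localVars (r : Rule) : Set Var :=
  {x | x ∈ basVarList r.guard ++ ucsVarList r.bodyC ++ basVarList r.bodyB} \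
    {x | x ∈ ucsVarList (r.kept ++ r.removed)}

/-- A rule is range-restricted iff it has no local variables -/
def Rule.RangeRestricted (r : Rule) : Prop := r.localVars = ∅

def Rule.map (θ : Var → Term) (r : Rule) : Rule :=
  ⟨r.kept.map (UserC.subst θ), r.removed.map (UserC.subst θ), r.guard.map (BAtom.subst θ),
   r.bodyC.map (UserC.subst θ), r.bodyB.map (BAtom.subst θ)⟩

/-- `r'` is a variant of `r`: it is obtained from `r` by renaming its variables
    with pairwise distinct variables -/
def Rule.IsVariantOf (r' r : Rule) : Prop :=
  ∃ ρ : Var → Var, Set.InjOn ρ r.vars ∧ r' = r.map (fun x => Term.var (ρ x))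

/-- A CHR program is a set of rules -/
abbrev Program := Set Rule
def Program.RangeRestricted (P : Program) : Prop := ∀ r ∈ P, r.RangeRestricted

/-! ## The equivalence-based operational semantics ωe -/

/-- An ωe state `⟨𝔾; 𝔹; 𝕍⟩` -/
structure StateE where
  uds : UStore
  bis : BStore
  glob : Set Var

/-- ωe state equivalence `≡e`: the smallest equivalence relation satisfying
    (1) equality as substitution, (2) CT-equivalent transformation of the built-in
    store up to strictly local variables, (3) omission of non-occurring global
    variables, (4) equivalence of failed states. -/
inductive EquivE (I : CTheory) : StateE → StateE → Prop
  | refl (σ : StateE) : EquivE I σ σ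
  | symm {σ τ : StateE} : EquivE I σ τ → EquivE I τ σ
  | trans {σ τ υ : StateE} : EquivE I σ τ → EquivE I τ υ → EquivE I σ υ
  | substEq (G : UStore) (B : BStore) (V : Set Var) (X : Var) (t : Term) :
      EquivE I ⟨G, BAtom.eq (.var X) t ::ₘ B, V⟩
               ⟨UStore.subst (single X t) G, BAtom.eq (.var X) t ::ₘ B, V⟩
  | builtin (G : UStore) (B B' : BStore) (V : Set Var) :
      I.equivUpTo (BStore.vars B \ (V ∪ UStore.vars G))
                  (BStore.vars B' \ (V ∪ UStore.vars G)) B B' →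
      EquivE I ⟨G, B, V⟩ ⟨G, B', V⟩
  | globalDrop (G : UStore) (B : BStore) (V : Set Var) (X : Var) :
      X ∉ UStore.vars G → X ∉ BStore.vars B →
      EquivE I ⟨G, B, insert X V⟩ ⟨G, B, V⟩
  | failed (G G' : UStore) (V : Set Var) : EquivE I ⟨G, botStore, V⟩ ⟨G', botStore, V⟩

/-- The ωe transition relation `↦e` (on `≡e`-equivalence classes, represented by
    states linked via `≡e` on both ends): application of a variant of a program rule
    whose local variables are fresh for the pre-transition state. -/
inductive StepE (I : CTheory) (P : Program) : StateE → StateE → Prop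
  | mk (σ τ : StateE) (r r' : Rule) (rest : UStore) (B : BStore) (V : Set Var) :
      r ∈ P → r'.IsVariantOf r →
      Disjoint r'.localVars (UStore.vars rest ∪ BStore.vars B ∪ V) →
      EquivE I σ ⟨↑r'.kept + ↑r'.removed + rest, ↑r'.guard + B, V⟩ →
      EquivE I ⟨↑r'.kept + ↑r'.bodyC + rest, ↑r'.guard + ↑r'.bodyB + B, V⟩ τ →
      StepE I P σ τ

/-! ## The operational semantics ω! with persistent constraints -/

/-- An ω! state `⟨𝕃; ℙ; 𝔹; 𝕍⟩` with linear store `𝕃` and persistent store `ℙ` -/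
structure StateB where
  lin : UStore
  per : UStore
  bis : BStore
  glob : Set Var

/-- ω! state equivalence `≡!`: the analogues of the `≡e` conditions (substitution
    acting on both stores, all failed states equivalent) together with contraction
    of the persistent store. -/
inductive EquivB (I : CTheory) : StateB → StateB → Prop
  | refl (σ : StateB) : EquivB I σ σ
  | symm {σ τ : StateB} : EquivB I σ τ → EquivB I τ σ
  | trans {σ τ υ : StateB} : EquivB I σ τ → EquivB I τ υ → EquivB I σ υ
  | substEq (L P : UStore) (B : BStore) (V : Set Var) (X : Var) (t : Term) :
      EquivB I ⟨L, P, BAtom.eq (.var X) t ::ₘ B, V⟩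
               ⟨UStore.subst (single X t) L, UStore.subst (single X t) P,
                BAtom.eq (.var X) t ::ₘ B, V⟩
  | builtin (L P : UStore) (B B' : BStore) (V : Set Var) :
      I.equivUpTo (BStore.vars B \ (V ∪ UStore.vars L ∪ UStore.vars P))
                  (BStore.vars B' \ (V ∪ UStore.vars L ∪ UStore.vars P)) B B' →
      EquivB I ⟨L, P, B, V⟩ ⟨L, P, B', V⟩
  | globalDrop (L P : UStore) (B : BStore) (V : Set Var) (X : Var) :
      X ∉ UStore.vars L → X ∉ UStore.vars P → X ∉ BStore.vars B →
      EquivB I ⟨L, P, B, insert X V⟩ ⟨L, P, B, V⟩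
  | failed (L P L' P' : UStore) (V V' : Set Var) :
      EquivB I ⟨L, P, botStore, V⟩ ⟨L', P', botStore, V'⟩
  | contract (L Q P : UStore) (B : BStore) (V : Set Var) :
      EquivB I ⟨L, Q + Q + P, B, V⟩ ⟨L, Q + P, B, V⟩

/-- The ω! transition relation `↦!` (on `≡!`-classes): **ApplyLinear** and
    **ApplyPersistent**, each subject to the irreflexivity condition `[σ] ≠ [τ]`. -/
inductive StepB (I : CTheory) (P : Program) : StateB → StateB → Prop
  | applyLinear (σ τ : StateB) (r r' : Rule) (H1l H1p H2l H2p rest perRest : UStore)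
      (B : BStore) (V : Set Var) :
      r ∈ P → r'.IsVariantOf r →
      (↑r'.kept : UStore) = H1l + H1p → (↑r'.removed : UStore) = H2l + H2p → H2l ≠ 0 →
      Disjoint r'.localVars
        (UStore.vars rest ∪ UStore.vars perRest ∪ BStore.vars B ∪ V) →
      EquivB I σ ⟨H1l + H2l + rest, H1p + H2p + perRest, ↑r'.guard + B, V⟩ →
      EquivB I ⟨H1l + ↑r'.bodyC + rest, H1p + H2p + perRest,
                ↑r'.guard + B + ↑r'.bodyB, V⟩ τ →
      ¬ EquivB I σ τ →
      StepB I P σ τ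
  | applyPersistent (σ τ : StateB) (r r' : Rule) (H1l H1p rest perRest : UStore)
      (B : BStore) (V : Set Var) :
      r ∈ P → r'.IsVariantOf r →
      (↑r'.kept : UStore) = H1l + H1p →
      Disjoint r'.localVars
        (UStore.vars rest ∪ UStore.vars perRest ∪ BStore.vars B ∪ V) →
      EquivB I σ ⟨H1l + rest, H1p + ↑r'.removed + perRest, ↑r'.guard + B, V⟩ →
      EquivB I ⟨H1l + rest, H1p + ↑r'.removed + ↑r'.bodyC + perRest,
                ↑r'.guard + B + ↑r'.bodyB, V⟩ τ →
      ¬ EquivB I σ τ →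
      StepB I P σ τ

/-!
An ω! derivation from `⟨𝔾; ∅; 𝔹; 𝕍⟩` can only fill the persistent store by **ApplyPersistent**, and
with an empty persistent store this needs a rule that removes nothing. Such a propagation rule
consumes none of its heads, and in a range-restricted program its application is never blocked by
a freshness condition, so in ωe it can be repeated forever. In the absence of such rules every ω!
step is an **ApplyLinear** step on linear constraints only, which is an ωe step.

The relation `≡!` forgets the stores of failed states, so this comparison is sound only for
satisfiable built-in stores. It suffices: all failed ωe states with the same global variables are
equivalent, so every rule maps a failed state to its own class, and a state from which ωe
terminates is not failed once the program has a rule.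
-/

/-- Termination of a transition relation `r` from the state `a`: there is no infinite derivation
`a = a₀, a₁, a₂, …` with `r aₙ aₙ₊₁` (see `terminatesFrom_iff_not_exists_derivation`). It is
encoded as accessibility under the converse of `r`, which provides induction along derivations. -/
def TerminatesFrom {α : Type*} (r : α → α → Prop) (a : α) : Prop :=
  Acc (flip r) a

theorem terminatesFrom_iff_not_exists_derivation {α : Type*} {r : α → α → Prop} {a : α} :
    TerminatesFrom r a ↔ ¬ ∃ f : ℕ → α, f 0 = a ∧ ∀ n, r (f n) (f (n + 1)) :=
  not_iff_comm.1 not_acc_iff_exists_descending_chain |>.symm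

theorem TerminatesFrom.of_step {α : Type*} {r : α → α → Prop} {a b : α}
    (ha : TerminatesFrom r a) (hab : r a b) : TerminatesFrom r b :=
  ha.inv hab

theorem TerminatesFrom.not_step_self {α : Type*} {r : α → α → Prop} {a : α}
    (ha : TerminatesFrom r a) : ¬ r a a := fun haa =>
  terminatesFrom_iff_not_exists_derivation.1 ha ⟨fun _ => a, rfl, fun _ => haa⟩

mutual
  theorem Term.varList_subst (θ : Var → Term) :
      ∀ t : Term, (t.subst θ).varList = t.varList.flatMap fun x => (θ x).varList
    | .var x => by simp [Term.subst, Term.varList]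
    | .app _ ts => by simpa only [Term.subst, Term.varList] using Term.varLists_substList θ ts
  theorem Term.varLists_substList (θ : Var → Term) :
      ∀ ts : List Term,
        Term.varLists (Term.substList θ ts) = (Term.varLists ts).flatMap fun x => (θ x).varList
    | [] => rfl
    | t :: ts => by
        simp only [Term.substList, Term.varLists, List.flatMap_append, Term.varList_subst θ t,
          Term.varLists_substList θ ts]
end

theorem UserC.varList_subst (θ : Var → Term) (c : UserC) :
    (c.subst θ).varList = c.varList.flatMap fun x => (θ x).varList :=
  Term.varLists_substList θ c.args

theorem BAtom.varList_subst (θ : Var → Term) (a : BAtom) :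
    (a.subst θ).varList = a.varList.flatMap fun x => (θ x).varList := by
  cases a <;>
    simp [BAtom.subst, BAtom.varList, Term.varList_subst, Term.varLists_substList]

theorem ucsVarList_map_subst (θ : Var → Term) (l : List UserC) :
    ucsVarList (l.map (UserC.subst θ)) = (ucsVarList l).flatMap fun x => (θ x).varList := by
  simp only [ucsVarList, ← List.flatMap_def, List.flatMap_map, List.flatMap_assoc,
    UserC.varList_subst]

theorem basVarList_map_subst (θ : Var → Term) (l : List BAtom) :
    basVarList (l.map (BAtom.subst θ)) = (basVarList l).flatMap fun x => (θ x).varList := by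
  simp only [basVarList, ← List.flatMap_def, List.flatMap_map, List.flatMap_assoc,
    BAtom.varList_subst]

namespace Rule

theorem RangeRestricted.map {r : Rule} (hr : r.RangeRestricted) (θ : Var → Term) :
    (r.map θ).RangeRestricted := by
  unfold RangeRestricted localVars at hr ⊢
  rw [Set.sdiff_eq_empty] at hr ⊢
  simp only [Rule.map, ← List.map_append, ucsVarList_map_subst, basVarList_map_subst,
    ← List.flatMap_append]
  intro x hx
  obtain ⟨y, hy, hxy⟩ := List.mem_flatMap.1 hx
  exact List.mem_flatMap.2 ⟨y, hr hy, hxy⟩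

theorem RangeRestricted.of_isVariantOf {r r' : Rule} (hr : r.RangeRestricted)
    (hv : r'.IsVariantOf r) : r'.RangeRestricted := by
  obtain ⟨ρ, -, rfl⟩ := hv
  exact hr.map _

theorem isVariantOf_map_var (r : Rule) : (r.map Term.var).IsVariantOf r :=
  ⟨id, Set.injOn_id _, rfl⟩

end Rule

namespace CTheory

variable {I : CTheory} {B B' : BStore}

/-- Satisfiability of a built-in store in the constraint theory. The states with an unsatisfiable
built-in store are the failed ones. -/
def Satisfiable (I : CTheory) (B : BStore) : Prop :=
  ∃ ρ, I.sat ρ B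

theorem Satisfiable.mono (hB : I.Satisfiable B') (hsub : B ⊆ B') : I.Satisfiable B :=
  hB.imp fun _ hρ a ha => hρ a (hsub ha)

theorem not_satisfiable_botStore (I : CTheory) : ¬ I.Satisfiable botStore :=
  fun ⟨_, hρ⟩ => hρ .bfalse (Multiset.mem_singleton_self _)

theorem equivUpTo.satisfiable_iff {S S' : Set Var} (h : I.equivUpTo S S' B B') :
    I.Satisfiable B ↔ I.Satisfiable B' := by
  constructor
  · rintro ⟨ρ, hρ⟩
    obtain ⟨ρ', -, hρ'⟩ := (h ρ).1 ⟨ρ, fun _ _ => rfl, hρ⟩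
    exact ⟨ρ', hρ'⟩
  · rintro ⟨ρ, hρ⟩
    obtain ⟨ρ', -, hρ'⟩ := (h ρ).2 ⟨ρ, fun _ _ => rfl, hρ⟩
    exact ⟨ρ', hρ'⟩

theorem equivUpTo_of_not_satisfiable (S S' : Set Var) (hB : ¬ I.Satisfiable B)
    (hB' : ¬ I.Satisfiable B') : I.equivUpTo S S' B B' := fun _ =>
  iff_of_false (fun ⟨ρ, _, hρ⟩ => hB ⟨ρ, hρ⟩) (fun ⟨ρ, _, hρ⟩ => hB' ⟨ρ, hρ⟩)

end CTheory

theorem EquivE.of_not_satisfiable {I : CTheory} {G G' : UStore} {B B' : BStore} {V : Set Var}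
    (hB : ¬ I.Satisfiable B) (hB' : ¬ I.Satisfiable B') : EquivE I ⟨G, B, V⟩ ⟨G', B', V⟩ :=
  have to_bot {G : UStore} {B : BStore} (hB : ¬ I.Satisfiable B) :
      EquivE I ⟨G, B, V⟩ ⟨G, botStore, V⟩ :=
    .builtin _ _ _ _ (CTheory.equivUpTo_of_not_satisfiable _ _ hB I.not_satisfiable_botStore)
  (to_bot hB).trans <| (EquivE.failed _ _ _).trans (to_bot hB').symm

/-- The ωe state obtained from an ω! state by forgetting its persistent store. States with an empty
persistent store correspond to ωe states in this way. -/
def StateB.toStateE (σ : StateB) : StateE :=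
  ⟨σ.lin, σ.bis, σ.glob⟩

namespace EquivB

variable {I : CTheory} {σ τ : StateB}

theorem satisfiable_iff (h : EquivB I σ τ) : I.Satisfiable σ.bis ↔ I.Satisfiable τ.bis := by
  induction h with
  | symm _ ih => exact ih.symm
  | trans _ _ ih₁ ih₂ => exact ih₁.trans ih₂
  | builtin _ _ _ _ _ h => exact h.satisfiable_iff
  | _ => rfl

theorem per_eq_zero_iff (h : EquivB I σ τ) (hs : I.Satisfiable σ.bis) :
    σ.per = 0 ↔ τ.per = 0 := by
  induction h with
  | symm h ih => exact (ih (h.satisfiable_iff.2 hs)).symm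
  | trans h _ ih₁ ih₂ => exact (ih₁ hs).trans (ih₂ (h.satisfiable_iff.1 hs))
  | substEq => exact Multiset.map_eq_zero.symm
  | failed => exact absurd hs I.not_satisfiable_botStore
  | contract => simp only [add_eq_zero, and_self]
  | _ => rfl

theorem toStateE (h : EquivB I σ τ) (hs : I.Satisfiable σ.bis) (hper : σ.per = 0) :
    EquivE I σ.toStateE τ.toStateE := by
  induction h with
  | refl => exact .refl _
  | symm h ih =>
    have hs' := h.satisfiable_iff.2 hs
    exact (ih hs' ((h.per_eq_zero_iff hs').2 hper)).symm
  | trans h _ ih₁ ih₂ =>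
    exact (ih₁ hs hper).trans (ih₂ (h.satisfiable_iff.1 hs) ((h.per_eq_zero_iff hs).1 hper))
  | substEq => exact .substEq _ _ _ _ _
  | builtin L Q B B' V h =>
    obtain rfl : Q = 0 := hper
    have vars_zero : UStore.vars 0 = ∅ := by simp [UStore.vars]
    rw [vars_zero, Set.union_empty] at h
    exact .builtin _ _ _ _ h
  | globalDrop _ _ _ _ _ hL _ hB => exact .globalDrop _ _ _ _ hL hB
  | failed => exact absurd hs I.not_satisfiable_botStore
  | contract => exact .refl _

end EquivB

section

variable {I : CTheory} {P : Program} {r r' : Rule}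

theorem StepE.trans_equivE {σ τ υ : StateE} (h : StepE I P σ τ) (hτ : EquivE I τ υ) :
    StepE I P σ υ := by
  cases h with
  | mk r r' rest B V hr hv hfresh hpre hpost =>
    exact .mk _ _ r r' rest B V hr hv hfresh hpre (hpost.trans hτ)

theorem StepE.of_rangeRestricted {σ : StateE} {rest : UStore} {B : BStore} {V : Set Var}
    (hr : r ∈ P) (hrr : r.RangeRestricted) (hv : r'.IsVariantOf r)
    (hσ : EquivE I σ ⟨↑r'.kept + ↑r'.removed + rest, ↑r'.guard + B, V⟩) :
    StepE I P σ ⟨↑r'.kept + ↑r'.bodyC + rest, ↑r'.guard + ↑r'.bodyB + B, V⟩ := by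
  have no_locals : r'.localVars = ∅ := hrr.of_isVariantOf hv
  exact .mk _ _ r r' rest B V hr hv (no_locals ▸ Set.empty_disjoint _) hσ (.refl _)

theorem StepE.self_of_not_satisfiable {σ : StateE} (hr : r ∈ P) (hrr : r.RangeRestricted)
    (hσ : ¬ I.Satisfiable σ.bis) : StepE I P σ σ := by
  obtain ⟨G, B, V⟩ := σ
  have unsat_add (C : BStore) : ¬ I.Satisfiable (C + B) := fun hs =>
    hσ (hs.mono (Multiset.subset_of_le (Multiset.le_add_left _ _)))
  have step := StepE.of_rangeRestricted (I := I) (rest := 0) hr hrr r.isVariantOf_map_var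
    (.of_not_satisfiable (G := G) (V := V) hσ (unsat_add _))
  exact step.trans_equivE (.of_not_satisfiable (unsat_add _) hσ)

theorem TerminatesFrom.satisfiable {σ : StateE} (hσ : TerminatesFrom (StepE I P) σ)
    (hr : r ∈ P) (hrr : r.RangeRestricted) : I.Satisfiable σ.bis := by
  by_contra hfail
  exact hσ.not_step_self (.self_of_not_satisfiable hr hrr hfail)

theorem not_terminatesFrom_of_removed_eq_nil {σ : StateE} {rest : UStore} {B : BStore}
    {V : Set Var} (hr : r ∈ P) (hrr : r.RangeRestricted) (hv : r'.IsVariantOf r)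
    (hrem : r'.removed = []) (hσ : EquivE I σ ⟨↑r'.kept + rest, ↑r'.guard + B, V⟩) :
    ¬ TerminatesFrom (StepE I P) σ := by
  intro hterm
  induction hterm generalizing rest B with
  | intro σ _ ih =>
    have step := StepE.of_rangeRestricted (P := P) (rest := rest) (B := B) hr hrr hv
      (by simpa only [hrem, Multiset.coe_nil, add_zero] using hσ)
    rw [add_assoc, add_assoc] at step
    exact ih _ step (.refl _)

theorem StepB.stepE_toStateE (hP : P.RangeRestricted) {σ τ : StateB} (h : StepB I P σ τ)
    (hterm : TerminatesFrom (StepE I P) σ.toStateE) (hper : σ.per = 0) :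
    StepE I P σ.toStateE τ.toStateE ∧ τ.per = 0 := by
  cases h with
  | applyLinear r r' H1l H1p H2l H2p rest perRest B V hr hv hkept hrem _ _ hpre hpost _ =>
    have sat_σ : I.Satisfiable σ.bis := hterm.satisfiable hr (hP r hr)
    have heads_linear : H1p + H2p + perRest = 0 := (hpre.per_eq_zero_iff sat_σ).1 hper
    have equiv_pre : EquivE I σ.toStateE ⟨H1l + H2l + rest, ↑r'.guard + B, V⟩ :=
      hpre.toStateE sat_σ hper
    obtain ⟨⟨rfl, rfl⟩, rfl⟩ := by simpa only [add_eq_zero] using heads_linear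
    obtain rfl : ↑r'.kept = H1l := by simpa only [add_zero] using hkept
    obtain rfl : ↑r'.removed = H2l := by simpa only [add_zero] using hrem
    have step := StepE.of_rangeRestricted hr (hP r hr) hv equiv_pre
    have sat_post := (hterm.of_step step).satisfiable hr (hP r hr)
    rw [add_right_comm (↑r'.guard : BStore)] at hpost
    exact ⟨step.trans_equivE (hpost.toStateE sat_post rfl),
      (hpost.per_eq_zero_iff sat_post).1 rfl⟩
  | applyPersistent r r' H1l H1p rest perRest B V hr hv hkept _ hpre _ _ =>
    have sat_σ : I.Satisfiable σ.bis := hterm.satisfiable hr (hP r hr)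
    have heads_linear : H1p + ↑r'.removed + perRest = 0 := (hpre.per_eq_zero_iff sat_σ).1 hper
    have equiv_pre : EquivE I σ.toStateE ⟨H1l + rest, ↑r'.guard + B, V⟩ :=
      hpre.toStateE sat_σ hper
    obtain ⟨⟨rfl, hrem⟩, rfl⟩ := by simpa only [add_eq_zero] using heads_linear
    obtain rfl : ↑r'.kept = H1l := by simpa only [add_zero] using hkept
    exact absurd hterm (not_terminatesFrom_of_removed_eq_nil hr (hP r hr) hv
      ((Multiset.coe_eq_zero _).1 hrem) equiv_pre)

theorem TerminatesFrom.stepB (hP : P.RangeRestricted) {σ : StateB}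
    (hterm : TerminatesFrom (StepE I P) σ.toStateE) (hper : σ.per = 0) :
    TerminatesFrom (StepB I P) σ := by
  generalize hσ : σ.toStateE = σₑ at hterm
  induction hterm generalizing σ with
  | intro _ hacc ih =>
    subst hσ
    refine .intro σ fun τ hτ => ?_
    obtain ⟨step, hper_τ⟩ := StepB.stepE_toStateE hP hτ (.intro _ hacc) hper
    exact ih _ step hper_τ rfl

end

/-! ## Statement 6: ωe-termination implies ω!-termination -/

/-- **Preservation of termination.** If there is no infinite `↦e` derivation from the
    ωe state `⟨𝔾; 𝔹; 𝕍⟩` for a range-restricted program `P`, then there is no infinite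
    `↦!` derivation from the corresponding ω! state `⟨𝔾; ∅; 𝔹; 𝕍⟩`. -/
theorem omega_e_terminating_implies_omega_bang_terminating
    (I : CTheory) (P : Program) (hP : P.RangeRestricted)
    (G : UStore) (B : BStore) (V : Set Var)
    (hterm : ¬ ∃ f : ℕ → StateE,
        f 0 = ⟨G, B, V⟩ ∧ ∀ n : ℕ, StepE I P (f n) (f (n + 1))) :
    ¬ ∃ g : ℕ → StateB,
        g 0 = ⟨G, 0, B, V⟩ ∧ ∀ n : ℕ, StepB I P (g n) (g (n + 1)) := by
  rw [← terminatesFrom_iff_not_exists_derivation] at hterm ⊢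
  exact TerminatesFrom.stepB hP hterm rfl
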